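/- Let S ⊆ ℝⁿ be a d-set with n−1 < d ≤ n, let k ∈ ℕ, 1 ≤ u, r < ∞, and R > 1. Then there is a constant C (depending on S, R, n, u, r, k) such that: whenever Q = Q(x_Q, r_Q) and Q' = Q(x_{Q'}, r_{Q'}) are cubes in ℝⁿ with x_{Q'} ∈ S, Q' ⊆ Q, and 0 < r_Q ≤ R·r_{Q'} ≤ R², then for every polynomial p on ℝⁿ of degree at most k, ((1/|Q|) ∫_Q |p|^r dx)^{1/r} ≤ C ((1/ℋᵈ(Q' ∩ S)) ∫_{Q'∩S} |p|^u dℋᵈ)^{1/u}. -/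

import Mathlib

open MeasureTheory Metric Set Filter
open scoped ENNReal NNReal Topology

noncomputable section

/-- ℝⁿ, with the sup-norm (given by the product metric on `Fin n → ℝ`). -/
abbrev Rn (n : ℕ) := Fin n → ℝ

/-- `S` is an (Ahlfors) `d`-set with regularity constant `C`. -/
def IsDSet {n : ℕ} (S : Set (Rn n)) (d C : ℝ) : Prop :=
  IsClosed S ∧ 1 < C ∧ ∀ w ∈ S, ∀ r : ℝ, 0 < r → r ≤ 1 →
    ENNReal.ofReal (C⁻¹ * r ^ d) ≤ μH[d] (closedBall w r ∩ S) ∧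
      μH[d] (closedBall w r ∩ S) ≤ ENNReal.ofReal (C * r ^ d)

/-!
A nonzero polynomial has an `ℋᵈ`-null zero set, because `d > n - 1`: by induction on the degree the
critical zeros are null, and near a regular zero the implicit function theorem parametrizes the
zero set by a Lipschitz map from dimension `n - 1`. So the zero set lies in an open set of small
`d`-dimensional Hausdorff content, which still contains `{|q| < ε}` for all nearby `q`. Compactness
of the unit sphere of the polynomials of degree at most `k` on the unit cube then gives one `ε` with
`{|p| < ε sup |p|}` of small content for all `p`. The content dominates a multiple of `ℋᵈ` on every
`d`-set, so after rescaling `Q` to the unit cube, `|p| ≥ ε sup_Q |p|` on at least half of `Q' ∩ S`,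
and both averages are compared with `sup_Q |p|`.
-/

section Averages

variable {α : Type*} [MeasurableSpace α] {μ : Measure α} {s : Set α} {f : α → ℝ≥0∞} {M : ℝ≥0∞}

lemma rpow_average_le_of_forall_le {r : ℝ} (hr : 0 < r) (hf : ∀ x ∈ s, f x ≤ M) :
    ((μ s)⁻¹ * ∫⁻ x in s, f x ^ r ∂μ) ^ (1 / r) ≤ M := by
  rw [one_div, ENNReal.rpow_inv_le_iff hr]
  calc (μ s)⁻¹ * ∫⁻ x in s, f x ^ r ∂μ
      ≤ (μ s)⁻¹ * ∫⁻ _ in s, M ^ r ∂μ := by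
        gcongr 1
        exact setLIntegral_mono measurable_const fun x hx ↦ ENNReal.rpow_le_rpow (hf x hx) hr.le
    _ = (μ s)⁻¹ * μ s * M ^ r := by rw [setLIntegral_const, mul_comm (M ^ r), mul_assoc]
    _ ≤ M ^ r := mul_le_of_le_one_left' (ENNReal.inv_mul_le_one _)

lemma le_rpow_average_of_measure_sublevel_le_half {u : ℝ} (hu : 0 < u) (hf : Measurable f)
    (h₀ : μ s ≠ 0) (h_top : μ s ≠ ∞) (h_half : μ {x ∈ s | f x < M} ≤ μ s / 2) :
    M ≤ 2 ^ (1 / u) * ((μ s)⁻¹ * ∫⁻ x in s, f x ^ u ∂μ) ^ (1 / u) := by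
  have h_large : μ s / 2 ≤ μ (s \ {x | f x < M}) := by
    refine (ENNReal.add_le_add_iff_left (ENNReal.div_ne_top h_top two_ne_zero)).1 ?_
    calc μ s / 2 + μ s / 2 = μ (s ∩ {x | f x < M}) + μ (s \ {x | f x < M}) := by
          rw [ENNReal.add_halves, measure_inter_add_sdiff s (measurableSet_lt hf measurable_const)]
      _ ≤ μ s / 2 + μ (s \ {x | f x < M}) := add_le_add_left h_half _
  have h_markov : M ^ u * (μ s / 2) ≤ ∫⁻ x in s, f x ^ u ∂μ :=
    calc M ^ u * (μ s / 2) ≤ M ^ u * μ (s \ {x | f x < M}) := by gcongr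
      _ = M ^ u * μ.restrict s {x | M ^ u ≤ f x ^ u} := by
        rw [Measure.restrict_apply (measurableSet_le measurable_const (hf.pow_const u)), inter_comm]
        simp only [sdiff_eq, compl_ofPred, not_lt, ENNReal.rpow_le_rpow_iff hu]
      _ ≤ ∫⁻ x in s, f x ^ u ∂μ := mul_meas_ge_le_lintegral (hf.pow_const u) _
  rw [← ENNReal.mul_rpow_of_nonneg _ _ (by positivity), one_div, ENNReal.le_rpow_inv_iff hu]
  calc M ^ u = 2 * ((μ s)⁻¹ * (M ^ u * (μ s / 2))) := by
        rw [mul_left_comm (μ s)⁻¹, ← mul_div_assoc, ENNReal.inv_mul_cancel h₀ h_top,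
          mul_left_comm, ENNReal.mul_div_cancel two_ne_zero ENNReal.ofNat_ne_top, mul_one]
    _ ≤ 2 * ((μ s)⁻¹ * ∫⁻ x in s, f x ^ u ∂μ) := by gcongr

end Averages

section HausdorffContent

variable {X : Type*} [EMetricSpace X] {d : ℝ} {δ η : ℝ≥0∞}

/-- The `d`-dimensional Hausdorff content at scale `δ`: the largest outer measure that is at most
`(diam t) ^ d` on every set `t` of diameter at most `δ`. Unlike `μH[d]`, which is its supremum over
`δ`, it is finite on bounded subsets of `ℝⁿ` for every `d > 0`, and for `δ ≤ 1` it dominates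
`C⁻¹ • μH[d].restrict S` for all `d`-sets `S` with constant `C` at once. -/
def hausdorffContent (d : ℝ) (δ : ℝ≥0∞) : OuterMeasure X :=
  OuterMeasure.mkMetric'.pre (fun t ↦ ediam t ^ d) δ

lemma le_hausdorffContent_iff {ν : OuterMeasure X} :
    ν ≤ hausdorffContent d δ ↔ ∀ t, ediam t ≤ δ → ν t ≤ ediam t ^ d :=
  OuterMeasure.mkMetric'.le_pre

lemma hausdorffContent_le_ediam_rpow {t : Set X} (ht : ediam t ≤ δ) :
    hausdorffContent d δ t ≤ ediam t ^ d :=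
  OuterMeasure.mkMetric'.pre_le ht

lemma exists_isOpen_superset_ediam_rpow_le {t : Set X} (hd : 0 < d) (ht : ediam t < δ)
    (hη : η ≠ 0) :
    ∃ U, IsOpen U ∧ t ⊆ U ∧ ediam U ≤ δ ∧ ediam U ^ d ≤ ediam t ^ d + η := by
  have h_lim : Tendsto (fun e : ℝ≥0 ↦ ediam t + 2 * e) (𝓝[>] 0) (𝓝 (ediam t)) := by
    have : Continuous fun e : ℝ≥0 ↦ ediam t + 2 * (e : ℝ≥0∞) := by fun_prop (disch := simp)
    simpa using (this.tendsto 0).mono_left nhdsWithin_le_nhds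
  have h_rpow : ediam t ^ d < ediam t ^ d + η :=
    ENNReal.lt_add_right (ENNReal.rpow_ne_top_of_nonneg hd.le (ne_top_of_lt ht)) hη
  have h_lim_rpow := (ENNReal.continuous_rpow_const (y := d)).continuousAt.tendsto.comp h_lim
  obtain ⟨e, heδ, heη, he : 0 < e⟩ := ((h_lim.eventually_lt_const ht).and
    ((h_lim_rpow.eventually_lt_const h_rpow).and self_mem_nhdsWithin)).exists
  have h_ediam := ediam_thickening_le (s := t) e
  exact ⟨thickening e t, isOpen_thickening, self_subset_thickening (by exact_mod_cast he) t,
    h_ediam.trans heδ.le, (ENNReal.rpow_le_rpow h_ediam hd.le).trans heη.le⟩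

lemma exists_isOpen_superset_hausdorffContent_le [MeasurableSpace X] [BorelSpace X] {s : Set X}
    (hd : 0 < d) (hδ : δ ≠ 0) (hη : η ≠ 0) (hs : μH[d] s = 0) :
    ∃ U, IsOpen U ∧ s ⊆ U ∧ hausdorffContent d δ U ≤ η := by
  obtain ⟨r, hr, hrδ⟩ := exists_between (pos_iff_ne_zero.2 hδ)
  obtain ⟨t, hst, htr, ht⟩ : ∃ t : ℕ → Set X, s ⊆ ⋃ i, t i ∧ (∀ i, ediam (t i) ≤ r) ∧
      ∑' i, ⨆ _ : (t i).Nonempty, ediam (t i) ^ d < η / 2 := by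
    simp only [Measure.hausdorffMeasure_apply, ENNReal.iSup_eq_zero] at hs
    simpa only [iInf_lt_iff, exists_prop] using (hs r hr).trans_lt (ENNReal.half_pos hη)
  obtain ⟨e, he, he_sum⟩ := ENNReal.exists_pos_sum_of_countable' (ENNReal.half_pos hη).ne' ℕ
  choose U hUo htU hUδ hUe using fun i ↦
    exists_isOpen_superset_ediam_rpow_le hd ((htr i).trans_lt hrδ) (he i).ne'
  have h_term (i : ℕ) : ediam (t i) ^ d ≤ ⨆ _ : (t i).Nonempty, ediam (t i) ^ d := by
    rcases (t i).eq_empty_or_nonempty with h | h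
    · simp [h, hd]
    · simp [h]
  refine ⟨⋃ i, U i, isOpen_iUnion hUo, hst.trans (iUnion_mono htU), ?_⟩
  calc hausdorffContent d δ (⋃ i, U i) ≤ ∑' i, hausdorffContent d δ (U i) := measure_iUnion_le U
    _ ≤ ∑' i, ((⨆ _ : (t i).Nonempty, ediam (t i) ^ d) + e i) := ENNReal.tsum_le_tsum fun i ↦
        (hausdorffContent_le_ediam_rpow (hUδ i)).trans ((hUe i).trans (by gcongr; exact h_term i))
    _ ≤ η / 2 + η / 2 := by rw [ENNReal.tsum_add]; exact add_le_add ht.le he_sum.le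
    _ = η := ENNReal.add_halves η

end HausdorffContent

section FiniteDimensionalFunctions

variable {X : Type*} [TopologicalSpace X] [CompactSpace X] {m : OuterMeasure X} {η : ℝ≥0∞}

lemma exists_pos_forall_mem_ball_sublevel_subset (f : C(X, ℝ)) {U : Set X} (hU : IsOpen U)
    (hfU : {x | f x = 0} ⊆ U) : ∃ ε > 0, ∀ g ∈ ball f ε, {x | |g x| < ε} ⊆ U := by
  obtain ⟨c, hc, hcf⟩ := hU.isClosed_compl.isCompact.exists_forall_le' (a := 0)
    f.continuous.abs.continuousOn fun x hx ↦ abs_pos.2 fun h ↦ hx (hfU h)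
  refine ⟨c / 2, half_pos hc, fun g hg x hx ↦ by_contra fun hxU ↦ ?_⟩
  have h_dist : |g x - f x| < c / 2 := (ContinuousMap.dist_apply_le_dist x).trans_lt hg
  have h_tri : |f x| - |g x| ≤ |f x - g x| := abs_sub_abs_le_abs_sub _ _
  rw [abs_sub_comm] at h_tri
  linarith [hcf x hxU, show |g x| < c / 2 from hx]

lemma exists_pos_forall_measure_sublevel_le (V : Submodule ℝ C(X, ℝ)) [FiniteDimensional ℝ V]
    (hV : ∀ f ∈ V, f ≠ 0 → ∃ U, IsOpen U ∧ {x | f x = 0} ⊆ U ∧ m U ≤ η) :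
    ∃ ε > 0, ∀ f ∈ V, m {x | |f x| < ε * ‖f‖} ≤ η := by
  obtain ⟨ε, hε, h⟩ : ∃ ε > 0, ∀ f ∈ sphere (0 : V) 1, m {x | |f.1 x| < ε} ≤ η := by
    refine (isCompact_sphere (0 : V) 1).induction_on
      (p := fun T ↦ ∃ ε > 0, ∀ f ∈ T, m {x | |f.1 x| < ε} ≤ η) ⟨1, one_pos, by simp⟩ ?_ ?_ ?_
    · exact fun T T' hT ⟨ε, hε, h⟩ ↦ ⟨ε, hε, fun f hf ↦ h f (hT hf)⟩
    · rintro T T' ⟨ε, hε, h⟩ ⟨ε', hε', h'⟩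
      have h_mono (f : V) {a b : ℝ} (hab : a ≤ b) : m {x | |f.1 x| < a} ≤ m {x | |f.1 x| < b} :=
        measure_mono fun x (hx : |f.1 x| < a) ↦ hx.trans_le hab
      refine ⟨min ε ε', lt_min hε hε', ?_⟩
      rintro f (hf | hf)
      · exact (h_mono f (min_le_left ε ε')).trans (h f hf)
      · exact (h_mono f (min_le_right ε ε')).trans (h' f hf)
    · intro f hf
      obtain ⟨U, hU, hfU, hmU⟩ := hV f f.2 fun h ↦ by simp_all
      obtain ⟨ε, hε, h⟩ := exists_pos_forall_mem_ball_sublevel_subset f.1 hU hfU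
      exact ⟨ball f ε, mem_nhdsWithin_of_mem_nhds (ball_mem_nhds f hε), ε, hε,
        fun g hg ↦ (measure_mono (h g hg)).trans hmU⟩
  refine ⟨ε, hε, fun f hf ↦ ?_⟩
  rcases eq_or_ne f 0 with rfl | hf₀
  · simp
  have hf_norm : 0 < ‖f‖ := norm_pos_iff.2 hf₀
  convert h (‖f‖⁻¹ • ⟨f, hf⟩) (by simp [norm_smul, hf_norm.ne']) using 4 with x
  simp [abs_mul, inv_mul_lt_iff₀ hf_norm, mul_comm]

end FiniteDimensionalFunctions

section LevelSets

open Module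

variable {E F : Type*} [NormedAddCommGroup E] [NormedSpace ℝ E] [FiniteDimensional ℝ E]
  [MeasurableSpace E] [BorelSpace E] [NormedAddCommGroup F] [NormedSpace ℝ F] {d : ℝ}

lemma exists_mem_nhds_hausdorffMeasure_levelSet_eq_zero [FiniteDimensional ℝ F] {f : E → F}
    {f' : E →L[ℝ] F} {a : E}
    (hf : HasStrictFDerivAt f f' a) (hf' : f'.range = ⊤) (hd : finrank ℝ f'.ker < d) :
    ∃ u ∈ 𝓝 a, μH[d] (u ∩ f ⁻¹' {f a}) = 0 := by
  obtain ⟨K, t, ht, hK⟩ := (hf.to_implicitFunction hf').exists_lipschitzOnWith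
  let chart := hf.implicitToOpenPartialHomeomorph f f' hf'
  have h_cont : ContinuousAt (fun x ↦ (chart x).2) a :=
    (chart.continuousAt (hf.mem_implicitToOpenPartialHomeomorph_source hf')).snd
  refine ⟨{x | hf.implicitFunction f f' hf' (f x) (chart x).2 = x ∧ (chart x).2 ∈ t},
    (hf.eq_implicitFunction hf').and (h_cont.eventually_mem (by simpa [chart] using ht)), ?_⟩
  refine measure_mono_null (t := hf.implicitFunction f f' hf' (f a) '' t) ?_ ?_
  · rintro x ⟨⟨hx, hxt⟩, hfx : f x = f a⟩
    exact ⟨_, hxt, by rwa [← hfx]⟩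
  · refine nonpos_iff_eq_zero.1
      ((hK.hausdorffMeasure_image_le ((Nat.cast_nonneg _).trans hd.le)).trans_eq ?_)
    rw [Real.hausdorffMeasure_of_finrank_lt hd, Measure.coe_zero, Pi.zero_apply, mul_zero]

lemma hausdorffMeasure_regular_zeroSet_eq_zero {f : E → ℝ} {f' : E → E →L[ℝ] ℝ}
    (hf : ∀ x, HasStrictFDerivAt f (f' x) x) (hd : finrank ℝ E - 1 < d) :
    μH[d] {x | f x = 0 ∧ f' x ≠ 0} = 0 := by
  refine measure_null_of_locally_null _ fun a ⟨hfa, hf'a⟩ ↦ ?_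
  have h_range : (f' a).range = ⊤ :=
    LinearMap.range_eq_top.2 (LinearMap.surjective (by exact_mod_cast hf'a))
  have h_ker : (finrank ℝ (f' a).ker : ℝ) < d := by
    have : finrank ℝ (f' a).ker + 1 = finrank ℝ E :=
      Dual.finrank_ker_add_one_of_ne_zero (f := (f' a).toLinearMap) (by exact_mod_cast hf'a)
    rw [← this] at hd
    push_cast at hd
    linarith
  obtain ⟨u, hu, hu₀⟩ := exists_mem_nhds_hausdorffMeasure_levelSet_eq_zero (hf a) h_range h_ker
  refine ⟨_, inter_mem_nhdsWithin _ hu, measure_mono_null ?_ hu₀⟩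
  rintro x ⟨⟨hx, -⟩, hxu⟩
  exact ⟨hxu, hx.trans hfa.symm⟩

end LevelSets

section Polynomials

open MvPolynomial

variable {σ R : Type*}

lemma totalDegree_pderiv_le [CommSemiring R] (p : MvPolynomial σ R) (i : σ) :
    (pderiv i p).totalDegree ≤ p.totalDegree - 1 := by
  refine Finset.sup_le fun m hm ↦ ?_
  have h_mem : m + Finsupp.single i 1 ∈ p.support := by
    rw [mem_support_iff, coeff_pderiv] at hm
    exact mem_support_iff.2 (left_ne_zero_of_mul hm)
  have h_deg := le_totalDegree h_mem
  rw [Finsupp.sum_add_index' (by simp) (by simp), Finsupp.sum_single_index rfl] at h_deg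
  exact Nat.le_sub_of_add_le h_deg

lemma exists_pderiv_ne_zero [CommSemiring R] [NoZeroDivisors R] [CharZero R]
    {p : MvPolynomial σ R} (hp : p.totalDegree ≠ 0) : ∃ i, pderiv i p ≠ 0 := by
  obtain ⟨m, hm, i, hi⟩ : ∃ m ∈ p.support, ∃ i, m i ≠ 0 := by
    by_contra! h
    exact hp ((totalDegree_eq_zero_iff σ p).2 h)
  refine ⟨i, ne_zero_iff.2 ⟨m - Finsupp.single i 1, ?_⟩⟩
  rw [coeff_pderiv, tsub_add_cancel_of_le (Finsupp.single_le_iff.2 (Nat.one_le_iff_ne_zero.2 hi))]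
  exact mul_ne_zero (mem_support_iff.1 hm) (Nat.cast_add_one_ne_zero _)

lemma totalDegree_bind₁_le {τ : Type*} [CommSemiring R] {f : σ → MvPolynomial τ R}
    (hf : ∀ i, (f i).totalDegree ≤ 1) (p : MvPolynomial σ R) :
    (bind₁ f p).totalDegree ≤ p.totalDegree := by
  rw [bind₁, aeval_def, eval₂_eq]
  refine totalDegree_finsetSum_le fun m hm ↦ ?_
  calc _ ≤ (C (coeff m p) : MvPolynomial τ R).totalDegree +
        (∏ i ∈ m.support, f i ^ m i).totalDegree := totalDegree_mul _ _
    _ ≤ ∑ i ∈ m.support, m i * 1 := by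
      rw [totalDegree_C, zero_add]
      exact (totalDegree_finsetProd _ _).trans (Finset.sum_le_sum fun i _ ↦
        (totalDegree_pow _ _).trans (Nat.mul_le_mul_left _ (hf i)))
    _ ≤ p.totalDegree := by simpa [Finsupp.sum] using le_totalDegree hm

lemma exists_totalDegree_le_eval_add_smul [CommSemiring R] (p : MvPolynomial σ R) (a : σ → R)
    (c : R) :
    ∃ q : MvPolynomial σ R, q.totalDegree ≤ p.totalDegree ∧
      ∀ x, eval x q = eval (a + c • x) p := by
  refine ⟨bind₁ (fun i ↦ C (a i) + C c * X i) p, totalDegree_bind₁_le (fun i ↦ ?_) p, fun x ↦ ?_⟩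
  · exact (totalDegree_add _ _).trans (max_le (by simp) ((totalDegree_mul _ _).trans
      (by simpa using (isHomogeneous_X R i).totalDegree_le)))
  · rw [eval, eval₂Hom_bind₁]
    congr! 2
    ext i
    simp

variable [Fintype σ]

lemma hasStrictFDerivAt_eval {𝕜 : Type*} [NontriviallyNormedField 𝕜] (p : MvPolynomial σ 𝕜)
    (x : σ → 𝕜) :
    HasStrictFDerivAt (fun y ↦ eval y p)
      (∑ i, eval x (pderiv i p) • ContinuousLinearMap.proj i : (σ → 𝕜) →L[𝕜] 𝕜) x := by
  induction p using MvPolynomial.induction_on with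
  | C a =>
    simp only [eval_C]
    exact (hasStrictFDerivAt_const a x).congr_fderiv (by ext; simp)
  | add p q hp hq =>
    simp only [map_add]
    exact (hp.fun_add hq).congr_fderiv (by ext; simp [add_mul, Finset.sum_add_distrib])
  | mul_X p j hp =>
    classical
    simp only [map_mul, eval_X]
    refine (hp.fun_mul (hasStrictFDerivAt_apply j x)).congr_fderiv ?_
    ext v
    simp [pderiv_X, Pi.single_apply, apply_ite, add_mul, Finset.sum_add_distrib, Finset.mul_sum,
      mul_assoc]

lemma hausdorffMeasure_zeroSet_eq_zero {p : MvPolynomial σ ℝ} (hp : p ≠ 0) {d : ℝ}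
    (hd : Fintype.card σ - 1 < d) : μH[d] {x | eval x p = 0} = 0 := by
  induction hk : p.totalDegree using Nat.strong_induction_on generalizing p with
  | h k ih =>
    rcases eq_or_ne k 0 with rfl | hk₀
    · rw [totalDegree_eq_zero_iff_eq_C.1 hk] at hp ⊢
      simp_all
    obtain ⟨i, hi⟩ := exists_pderiv_ne_zero (hk ▸ hk₀)
    have h_crit : μH[d] {x | eval x (pderiv i p) = 0} = 0 :=
      ih _ (by have := totalDegree_pderiv_le p i; omega) hi rfl
    have h_reg := hausdorffMeasure_regular_zeroSet_eq_zero (hasStrictFDerivAt_eval p)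
      (by simpa using hd)
    refine measure_mono_null ?_ (measure_union_null h_reg h_crit)
    intro x hx
    refine or_iff_not_imp_left.2 fun h ↦ ?_
    have h_deriv : (∑ j, eval x (pderiv j p) • ContinuousLinearMap.proj j : (σ → ℝ) →L[ℝ] ℝ) = 0 :=
      not_not.1 fun h' ↦ h ⟨hx, h'⟩
    classical
    simpa [Pi.single_apply] using DFunLike.congr_fun h_deriv (Pi.single i 1)

lemma exists_pos_forall_hausdorffContent_sublevel_le {K : Set (σ → ℝ)} (hK : IsCompact K) {d : ℝ}
    (hd₀ : 0 < d) (hd : Fintype.card σ - 1 < d) {δ η : ℝ≥0∞} (hδ : δ ≠ 0) (hη : η ≠ 0) (k : ℕ) :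
    ∃ ε > 0, ∀ p : MvPolynomial σ ℝ, p.totalDegree ≤ k → ∀ x₀ ∈ K,
      hausdorffContent d δ {x ∈ K | |eval x p| < ε * |eval x₀ p|} ≤ η := by
  have : CompactSpace K := isCompact_iff_compactSpace.1 hK
  let restrictHom : MvPolynomial σ ℝ →ₐ[ℝ] C(K, ℝ) :=
    aeval fun i ↦ ⟨fun x ↦ x.1 i, (continuous_apply i).comp continuous_subtype_val⟩
  have h_eval (p : MvPolynomial σ ℝ) (x : K) : restrictHom p x = eval x.1 p := by
    induction p using MvPolynomial.induction_on <;> simp_all [restrictHom]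
  obtain ⟨ε, hε, h⟩ := exists_pos_forall_measure_sublevel_le
    (m := OuterMeasure.comap Subtype.val (hausdorffContent d δ)) (η := η)
    ((restrictTotalDegree σ ℝ k).map restrictHom.toLinearMap) <| by
      rintro _ ⟨p, -, rfl⟩ hp
      have hp₀ : p ≠ 0 := by rintro rfl; simp at hp
      obtain ⟨U, hU, hpU, hU_le⟩ := exists_isOpen_superset_hausdorffContent_le hd₀ hδ hη
        (hausdorffMeasure_zeroSet_eq_zero hp₀ hd)
      refine ⟨Subtype.val ⁻¹' U, hU.preimage continuous_subtype_val,
        fun x hx ↦ hpU ((h_eval p x).symm.trans hx), ?_⟩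
      rw [OuterMeasure.comap_apply]
      exact (measure_mono (image_preimage_subset _ _)).trans hU_le
  refine ⟨ε, hε, fun p hp x₀ hx₀ ↦ ?_⟩
  have h_norm : |eval x₀ p| ≤ ‖restrictHom p‖ := by
    simpa [h_eval] using (restrictHom p).norm_coe_le_norm ⟨x₀, hx₀⟩
  refine (measure_mono ?_).trans (h (restrictHom p) ⟨p, (mem_restrictTotalDegree σ k p).2 hp, rfl⟩)
  rintro x ⟨hxK, hx⟩
  refine ⟨⟨x, hxK⟩, ?_, rfl⟩
  calc |restrictHom p ⟨x, hxK⟩| = |eval x p| := by rw [h_eval]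
    _ < ε * |eval x₀ p| := hx
    _ ≤ ε * ‖restrictHom p‖ := by gcongr

end Polynomials

namespace IsDSet

variable {n : ℕ} {S : Set (Rn n)} {d C r : ℝ} {w : Rn n}

lemma hausdorffMeasure_inter_le (hS : IsDSet S d C) (hd : 0 < d) {t : Set (Rn n)}
    (ht : ediam t ≤ 1) : μH[d] (t ∩ S) ≤ ENNReal.ofReal C * ediam t ^ d := by
  rcases (t ∩ S).eq_empty_or_nonempty with h_empty | ⟨w, hwt, hwS⟩
  · simp [h_empty]
  rcases eq_or_ne (ediam t) 0 with h₀ | h₀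
  · have := Measure.nullSingletonClass_hausdorff (X := Rn n) hd
    simp [((ediam_eq_zero_iff.1 h₀).anti inter_subset_left).measure_zero]
  have h_top : ediam t ≠ ∞ := ne_top_of_le_ne_top ENNReal.one_ne_top ht
  have h_pos : 0 < (ediam t).toReal := ENNReal.toReal_pos h₀ h_top
  have h_sub : t ⊆ closedBall w (ediam t).toReal := fun y hy ↦ by
    rw [mem_closedBall, ← ENNReal.ofReal_le_ofReal_iff h_pos.le, ← edist_dist,
      ENNReal.ofReal_toReal h_top]
    exact edist_le_ediam_of_mem hy hwt
  calc μH[d] (t ∩ S) ≤ μH[d] (closedBall w (ediam t).toReal ∩ S) := by gcongr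
    _ ≤ ENNReal.ofReal (C * (ediam t).toReal ^ d) :=
      (hS.2.2 w hwS _ h_pos (ENNReal.toReal_mono ENNReal.one_ne_top ht)).2
    _ = ENNReal.ofReal C * ediam t ^ d := by
      rw [ENNReal.ofReal_mul (by linarith [hS.2.1]), ← ENNReal.ofReal_rpow_of_pos h_pos,
        ENNReal.ofReal_toReal h_top]

lemma hausdorffMeasure_image_inter_le {X : Type*} [EMetricSpace X] (hS : IsDSet S d C) (hd : 0 < d)
    {φ : X → Rn n} {ρ : ℝ≥0} (hφ : LipschitzWith ρ φ) (hρ : ρ ≠ 0) {δ : ℝ≥0∞} (hδ : ρ * δ ≤ 1)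
    (t : Set X) :
    μH[d] (φ '' t ∩ S) ≤ ENNReal.ofReal C * ρ ^ d * hausdorffContent d δ t := by
  set c : ℝ≥0∞ := ENNReal.ofReal C * ρ ^ d with hc
  have hC₀ : 0 < C := one_pos.trans hS.2.1
  have hc₀ : c ≠ 0 := by simp [hc, hC₀, hρ, hd.not_gt]
  have hc_top : c ≠ ∞ := by simp [hc, ENNReal.mul_eq_top, hρ]
  let ν : OuterMeasure X :=
    c⁻¹ • OuterMeasure.comap φ (OuterMeasure.restrict S (μH[d] : Measure (Rn n)).toOuterMeasure)
  have hν (t : Set X) : ν t = c⁻¹ * μH[d] (φ '' t ∩ S) := by simp [ν]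
  have h_le : ν ≤ hausdorffContent d δ := le_hausdorffContent_iff.2 fun t ht ↦ by
    have h_image : ediam (φ '' t) ≤ ρ * ediam t := hφ.ediam_image_le t
    have h_one : ρ * ediam t ≤ 1 := (mul_le_mul_right ht _).trans hδ
    rw [hν, ENNReal.inv_mul_le_iff hc₀ hc_top]
    calc μH[d] (φ '' t ∩ S) ≤ ENNReal.ofReal C * ediam (φ '' t) ^ d :=
          hS.hausdorffMeasure_inter_le hd (h_image.trans h_one)
      _ ≤ ENNReal.ofReal C * (ρ * ediam t) ^ d := by gcongr
      _ = c * ediam t ^ d := by rw [ENNReal.mul_rpow_of_nonneg _ _ hd.le, mul_assoc]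
  exact (ENNReal.inv_mul_le_iff hc₀ hc_top).1 ((hν t).symm.trans_le (h_le t))

lemma hausdorffMeasure_inter_pos (hS : IsDSet S d C) (hw : w ∈ S) (hr : 0 < r) :
    0 < μH[d] (closedBall w r ∩ S) := by
  have hC : 0 < C := one_pos.trans hS.2.1
  have h_min : 0 < min r 1 := lt_min hr one_pos
  calc 0 < ENNReal.ofReal (C⁻¹ * min r 1 ^ d) := ENNReal.ofReal_pos.2 (by positivity)
    _ ≤ μH[d] (closedBall w (min r 1) ∩ S) := (hS.2.2 w hw _ h_min (min_le_right r 1)).1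
    _ ≤ μH[d] (closedBall w r ∩ S) := by gcongr; exact min_le_left r 1

lemma hausdorffMeasure_inter_lt_top (hS : IsDSet S d C) (w : Rn n) (r : ℝ) :
    μH[d] (closedBall w r ∩ S) < ∞ := by
  refine ((isCompact_closedBall w r).inter_right hS.1).measure_lt_top_of_nhdsWithin fun y hy ↦ ?_
  refine ⟨closedBall y 1 ∩ S, ?_,
    (hS.2.2 y hy.2 1 one_pos le_rfl).2.trans_lt ENNReal.ofReal_lt_top⟩
  exact inter_mem (mem_nhdsWithin_of_mem_nhds (closedBall_mem_nhds y one_pos))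
    (mem_of_superset self_mem_nhdsWithin inter_subset_right)

lemma ofReal_le_hausdorffMeasure_inter (hS : IsDSet S d C) (hw : w ∈ S) {L ρ : ℝ} (hL : 0 < L)
    (hρ : 0 < ρ) (hρL : ρ ≤ L) (hρr : ρ ≤ L * r) :
    ENNReal.ofReal (C⁻¹ * (ρ / L) ^ d) ≤ μH[d] (closedBall w r ∩ S) :=
  (hS.2.2 w hw (ρ / L) (div_pos hρ hL) ((div_le_one hL).2 hρL)).1.trans <| by
    gcongr
    exact (div_le_iff₀' hL).2 hρr

end IsDSet

section Remez

open MvPolynomial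

variable {n : ℕ} {d C₀ : ℝ}

lemma exists_pos_forall_hausdorffMeasure_sublevel_le (hC₀ : 0 < C₀) (hd : (n : ℝ) - 1 < d) (k : ℕ)
    {L η : ℝ} (hL : 0 < L) (hη : 0 < η) :
    ∃ ε > 0, ∀ S : Set (Rn n), IsDSet S d C₀ → ∀ (x : Rn n) (ρ : ℝ), 0 < ρ → ρ ≤ L →
      ∀ p : MvPolynomial (Fin n) ℝ, p.totalDegree ≤ k → ∀ x₀ ∈ closedBall x ρ,
        μH[d] {y ∈ closedBall x ρ ∩ S | |eval y p| < ε * |eval x₀ p|} ≤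
          ENNReal.ofReal (η * ρ ^ d) := by
  rcases n.eq_zero_or_pos with rfl | hn
  · refine ⟨1, one_pos, fun S _ x ρ _ _ p _ x₀ _ ↦ ?_⟩
    simp [Subsingleton.elim _ x₀]
  have hd₀ : 0 < d := by
    have : (1 : ℝ) ≤ n := by exact_mod_cast hn
    linarith
  obtain ⟨ε, hε, h⟩ := exists_pos_forall_hausdorffContent_sublevel_le
    (isCompact_closedBall (0 : Rn n) 1) hd₀ (by simpa using hd)
    (δ := ENNReal.ofReal L⁻¹) (η := ENNReal.ofReal (C₀⁻¹ * η))
    (by simpa) (ENNReal.ofReal_pos.2 (by positivity)).ne' k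
  refine ⟨ε, hε, fun S hS x ρ hρ hρL p hp x₀ hx₀ ↦ ?_⟩
  obtain ⟨q, hq, h_eval⟩ := exists_totalDegree_le_eval_add_smul p x ρ
  have h_lip : LipschitzWith ρ.toNNReal fun z : Rn n ↦ x + ρ • z :=
    LipschitzWith.of_dist_le_mul fun y z ↦ by simp [dist_smul₀, hρ.le, abs_of_pos hρ]
  have h_scale : ENNReal.ofReal ρ * ENNReal.ofReal L⁻¹ ≤ 1 := by
    rw [← ENNReal.ofReal_mul hρ.le, ENNReal.ofReal_le_one]
    exact mul_inv_le_one_of_le₀ hρL hL.le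
  have h_ball : closedBall x ρ = (fun z ↦ x + ρ • z) '' closedBall 0 1 := by
    rw [← affinity_unitClosedBall hρ.le, ← image_smul, ← image_vadd, image_image]
    rfl
  rw [h_ball] at hx₀ ⊢
  obtain ⟨z₀, hz₀, rfl⟩ := hx₀
  set T : Set (Rn n) := {z ∈ closedBall 0 1 | |eval z q| < ε * |eval z₀ q|}
  calc _ ≤ μH[d] ((fun z ↦ x + ρ • z) '' T ∩ S) := by
        refine measure_mono ?_
        rintro _ ⟨⟨⟨z, hz, rfl⟩, hzS⟩, hzp⟩
        exact ⟨⟨z, ⟨hz, by simpa only [h_eval] using hzp⟩, rfl⟩, hzS⟩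
    _ ≤ ENNReal.ofReal C₀ * ENNReal.ofReal ρ ^ d * hausdorffContent d (ENNReal.ofReal L⁻¹) T :=
      hS.hausdorffMeasure_image_inter_le hd₀ h_lip (by simpa) h_scale T
    _ ≤ ENNReal.ofReal C₀ * ENNReal.ofReal ρ ^ d * ENNReal.ofReal (C₀⁻¹ * η) := by
      gcongr
      exact h q (hq.trans hp) z₀ hz₀
    _ = ENNReal.ofReal (η * ρ ^ d) := by
      rw [ENNReal.ofReal_rpow_of_pos hρ, ← ENNReal.ofReal_mul hC₀.le,
        ← ENNReal.ofReal_mul (by positivity)]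
      congr 1
      field_simp

lemma exists_pos_forall_hausdorffMeasure_sublevel_le_half (hC₀ : 0 < C₀) (hd : (n : ℝ) - 1 < d)
    (k : ℕ) {L : ℝ} (hL : 0 < L) :
    ∃ ε > 0, ∀ S : Set (Rn n), IsDSet S d C₀ → ∀ (x w : Rn n) (ρ r : ℝ), w ∈ S →
      closedBall w r ⊆ closedBall x ρ → 0 < ρ → ρ ≤ L → ρ ≤ L * r →
      ∀ p : MvPolynomial (Fin n) ℝ, p.totalDegree ≤ k → ∀ x₀ ∈ closedBall x ρ,
        μH[d] {y ∈ closedBall w r ∩ S | |eval y p| < ε * |eval x₀ p|} ≤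
          μH[d] (closedBall w r ∩ S) / 2 := by
  obtain ⟨ε, hε, h⟩ := exists_pos_forall_hausdorffMeasure_sublevel_le hC₀ hd k hL
    (η := C₀⁻¹ / L ^ d / 2) (by positivity)
  refine ⟨ε, hε, fun S hS x w ρ r hw h_sub hρ hρL hρr p hp x₀ hx₀ ↦ ?_⟩
  calc μH[d] {y ∈ closedBall w r ∩ S | |eval y p| < ε * |eval x₀ p|}
      ≤ μH[d] {y ∈ closedBall x ρ ∩ S | |eval y p| < ε * |eval x₀ p|} := by gcongr
    _ ≤ ENNReal.ofReal (C₀⁻¹ / L ^ d / 2 * ρ ^ d) := h S hS x ρ hρ hρL p hp x₀ hx₀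
    _ = ENNReal.ofReal (C₀⁻¹ * (ρ / L) ^ d) / 2 := by
      rw [Real.div_rpow hρ.le hL.le, ← ENNReal.ofReal_ofNat 2, ← ENNReal.ofReal_div_of_pos two_pos]
      congr 1
      ring
    _ ≤ μH[d] (closedBall w r ∩ S) / 2 := by
      gcongr
      exact hS.ofReal_le_hausdorffMeasure_inter hw hL hρ hρL hρr

theorem remez_inequality_general {n : ℕ} (d C₀ : ℝ) (hC₀ : 0 < C₀) (hd : (n : ℝ) - 1 < d) (k : ℕ)
    (u r R : ℝ) (hu : 0 < u) (hr : 0 < r) (hR : 1 ≤ R) :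
    ∃ C > 0, ∀ S : Set (Rn n), IsDSet S d C₀ → ∀ (xQ xQ' : Rn n) (rQ rQ' : ℝ), xQ' ∈ S →
      closedBall xQ' rQ' ⊆ closedBall xQ rQ → 0 < rQ → rQ ≤ R * rQ' → R * rQ' ≤ R ^ 2 →
      ∀ P : MvPolynomial (Fin n) ℝ, P.totalDegree ≤ k →
        ((volume (closedBall xQ rQ))⁻¹ *
            ∫⁻ y in closedBall xQ rQ, ENNReal.ofReal |eval y P| ^ r) ^ (1 / r)
          ≤ ENNReal.ofReal C *
            ((μH[d] (closedBall xQ' rQ' ∩ S))⁻¹ *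
              ∫⁻ y in closedBall xQ' rQ' ∩ S, ENNReal.ofReal |eval y P| ^ u ∂μH[d]) ^ (1 / u) := by
  have hR₀ : 0 < R := one_pos.trans_le hR
  obtain ⟨ε, hε, h_half⟩ := exists_pos_forall_hausdorffMeasure_sublevel_le_half hC₀ hd k
    (pow_pos hR₀ 2)
  refine ⟨ε⁻¹ * 2 ^ (1 / u), by positivity,
    fun S hS xQ xQ' rQ rQ' hxQ' h_sub hrQ hrQ_le hrQ'_le P hP ↦ ?_⟩
  have hrQ' : 0 < rQ' := pos_of_mul_pos_right (hrQ.trans_le hrQ_le) hR₀.le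
  have h_scale : rQ ≤ R ^ 2 * rQ' := by nlinarith
  obtain ⟨x₀, hx₀, h_max⟩ := (isCompact_closedBall xQ rQ).exists_isMaxOn
    (nonempty_closedBall.2 hrQ.le) P.continuous_eval.abs.continuousOn
  have h_sublevel : μH[d] {y ∈ closedBall xQ' rQ' ∩ S |
      ENNReal.ofReal |eval y P| < ENNReal.ofReal (ε * |eval x₀ P|)} ≤
        μH[d] (closedBall xQ' rQ' ∩ S) / 2 := by
    refine le_trans (measure_mono ?_)
      (h_half S hS xQ xQ' rQ rQ' hxQ' h_sub hrQ (hrQ_le.trans hrQ'_le) h_scale P hP x₀ hx₀)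
    exact fun y hy ↦ ⟨hy.1, (ENNReal.ofReal_lt_ofReal_iff'.1 hy.2).1⟩
  have h_lower := le_rpow_average_of_measure_sublevel_le_half hu
    P.continuous_eval.abs.measurable.ennreal_ofReal (hS.hausdorffMeasure_inter_pos hxQ' hrQ').ne'
    (hS.hausdorffMeasure_inter_lt_top xQ' rQ').ne h_sublevel
  calc _ ≤ ENNReal.ofReal |eval x₀ P| :=
        rpow_average_le_of_forall_le hr fun y hy ↦ ENNReal.ofReal_le_ofReal (h_max hy)
    _ = ENNReal.ofReal ε⁻¹ * ENNReal.ofReal (ε * |eval x₀ P|) := by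
      rw [← ENNReal.ofReal_mul (inv_nonneg.2 hε.le), inv_mul_cancel_left₀ hε.ne']
    _ ≤ _ := by
      rw [ENNReal.ofReal_mul (inv_nonneg.2 hε.le), ← ENNReal.ofReal_rpow_of_pos two_pos,
        ENNReal.ofReal_ofNat, mul_assoc]
      gcongr

end Remez

/-- **Remez type inequality on `d`-sets** (Theorem 2.4). Let `S ⊆ ℝⁿ` be a `d`-set,
`n−1 < d ≤ n`, `k ∈ ℕ`, `1 ≤ u, r < ∞` and `R > 1`. There is `C > 0` such that for all
cubes `Q = Q(x_Q,r_Q)`, `Q' = Q(x_{Q'},r_{Q'})` with `x_{Q'} ∈ S`, `Q' ⊆ Q` and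
`0 < r_Q ≤ R r_{Q'} ≤ R²`, and every polynomial `p` of degree at most `k`,
`((1/|Q|)∫_Q |p|^r)^{1/r} ≤ C ((1/ℋᵈ(Q'∩S)) ∫_{Q'∩S} |p|^u dℋᵈ)^{1/u}`. -/
theorem remez_inequality {n : ℕ} (S : Set (Rn n)) (d C₀ : ℝ) (hS : IsDSet S d C₀)
    (hd1 : (n : ℝ) - 1 < d) (hd2 : d ≤ n) (k : ℕ) (u r R : ℝ)
    (hu : 1 ≤ u) (hr : 1 ≤ r) (hR : 1 < R) :
    ∃ C > 0, ∀ (xQ xQ' : Rn n) (rQ rQ' : ℝ), xQ' ∈ S →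
      closedBall xQ' rQ' ⊆ closedBall xQ rQ →
      0 < rQ → rQ ≤ R * rQ' → R * rQ' ≤ R ^ 2 →
      ∀ P : MvPolynomial (Fin n) ℝ, P.totalDegree ≤ k →
        ((volume (closedBall xQ rQ))⁻¹ *
            ∫⁻ y in closedBall xQ rQ, ENNReal.ofReal |MvPolynomial.eval y P| ^ r) ^ (1 / r)
          ≤ ENNReal.ofReal C *
            ((μH[d] (closedBall xQ' rQ' ∩ S))⁻¹ *
              ∫⁻ y in closedBall xQ' rQ' ∩ S,
                ENNReal.ofReal |MvPolynomial.eval y P| ^ u ∂μH[d]) ^ (1 / u) := by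
  obtain ⟨C, hC, h⟩ := remez_inequality_general d C₀ (one_pos.trans hS.2.1) hd1 k u r R
    (one_pos.trans_le hu) (one_pos.trans_le hr) hR.le
  exact ⟨C, hC, h S hS⟩
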